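/- arXiv:2506.07252 — 2 statements merged into one kernel-verified Lean document; each statement's English description precedes it below -/
import Mathlib

section
/- Let C be a convex polygon in ℝ² and O an interior point of C. If φ* is a local maximizer of the chord-length function f̃(φ) = |l(φ) ∩ C|, with chord [A*B*], then at least one of the endpoints A*, B* is a vertex of C. -/
open Real RealInnerProductSpace

/-- Unit direction vector in the plane at angle `φ`. -/
noncomputable def lineDir (φ : ℝ) : EuclideanSpace ℝ (Fin 2) :=
  (WithLp.equiv 2 (Fin 2 → ℝ)).symm ![Real.cos φ, Real.sin φ]

open Filter Topology

lemma left_mem_extremePoints_segment {E : Type*} [AddCommGroup E] [Module ℝ E] (x y : E) :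
    x ∈ (segment ℝ x y).extremePoints ℝ := by
  rw [mem_extremePoints_iff_left]
  refine ⟨left_mem_segment ℝ x y, ?_⟩
  intro x₁ h₁ x₂ h₂ hx
  rw [segment_eq_image'] at h₁ h₂
  obtain ⟨s, hs, rfl⟩ := h₁
  obtain ⟨t, ht, rfl⟩ := h₂
  obtain ⟨p, q, hp, hq, hpq, h⟩ := hx
  have h0 : (p * s + q * t) • (y - x) = 0 := by
    have hx : x = (p + q) • x := by rw [hpq, one_smul]
    calc (p * s + q * t) • (y - x)
        = p • (x + s • (y - x)) + q • (x + t • (y - x)) - (p + q) • x := by module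
      _ = 0 := by rw [h, hpq, one_smul, sub_self]
  rcases smul_eq_zero.1 h0 with h0 | h0
  · have hs0 : s = 0 := by
      have h1 := mul_nonneg hp.le hs.1
      have h2 := mul_nonneg hq.le ht.1
      have h3 : p * s = 0 := by linarith
      exact (mul_eq_zero.1 h3).resolve_left hp.ne'
    simp [hs0]
  · simp [h0]

lemma dist_le_dist_of_mem_segment {E : Type*} [NormedAddCommGroup E] [NormedSpace ℝ E]
    {x y z w : E} (hz : z ∈ segment ℝ x y) (hw : w ∈ segment ℝ x y) :
    dist z w ≤ dist x y := by
  rw [segment_eq_image'] at hz hw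
  obtain ⟨s, hs, rfl⟩ := hz
  obtain ⟨t, ht, rfl⟩ := hw
  have h : x + s • (y - x) - (x + t • (y - x)) = (s - t) • (y - x) := by module
  rw [dist_eq_norm, h, norm_smul, dist_comm x y, dist_eq_norm, Real.norm_eq_abs]
  refine mul_le_of_le_one_left (norm_nonneg _) ?_
  rw [abs_le]
  constructor <;> linarith [hs.1, hs.2, ht.1, ht.2]

lemma norm_lineDir (φ : ℝ) : ‖lineDir φ‖ = 1 := by
  simp [lineDir, EuclideanSpace.norm_eq, Fin.sum_univ_two]

lemma lineDir_add (φ h : ℝ) :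
    lineDir (φ + h) = cos h • lineDir φ + sin h • lineDir (φ + π / 2) := by
  ext i
  fin_cases i <;> simp [lineDir, cos_add, sin_add] <;> ring

lemma exists_eq_lineDir_add_lineDir (φ : ℝ) (w : EuclideanSpace ℝ (Fin 2)) :
    ∃ x y : ℝ, w = x • lineDir φ + y • lineDir (φ + π / 2) := by
  have h := sin_sq_add_cos_sq φ
  refine ⟨w 0 * cos φ + w 1 * sin φ, -(w 0) * sin φ + w 1 * cos φ, ?_⟩
  ext i
  fin_cases i <;> simp [lineDir, cos_add, sin_add]
  · linear_combination -(w 0) * h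
  · linear_combination -(w 1) * h

/-- A non-extreme point of `C` which is an end of the chord at angle `φ` lies inside a segment
of `C` transversal to that chord. -/
lemma exists_transversal_mem {C : Set (EuclideanSpace ℝ (Fin 2))} (hC : Convex ℝ C)
    {O A : EuclideanSpace ℝ (Fin 2)} {φ : ℝ}
    (hA : A ∈ ({x | ∃ t : ℝ, x = O + t • lineDir φ} ∩ C).extremePoints ℝ)
    (hAC : A ∉ C.extremePoints ℝ) :
    ∃ s : ℝ, ∀ᶠ τ in 𝓝 (0 : ℝ), A + τ • (s • lineDir φ + lineDir (φ + π / 2)) ∈ C := by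
  rw [mem_extremePoints_iff_left] at hA hAC
  push Not at hAC
  obtain ⟨⟨⟨t, ht⟩, hAmem⟩, hext⟩ := hA
  obtain ⟨P, hP, Q, hQ, hPQ, hne⟩ := hAC hAmem
  obtain ⟨p, q, hp, hq, hpq, hcomb⟩ := id hPQ
  obtain ⟨x, y, hw⟩ := exists_eq_lineDir_add_lineDir φ (Q - P)
  have hp' : p = 1 - q := by linarith
  have hAP : A = P + q • (Q - P) := by rw [← hcomb, hp']; module
  have hPA : P = A - q • (Q - P) := by rw [hAP]; module
  have hQA : Q = A + p • (Q - P) := by rw [hAP, hp']; module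
  have hy : y ≠ 0 := by
    rintro rfl
    simp only [zero_smul, add_zero] at hw
    refine hne (hext P ⟨⟨t - q * x, ?_⟩, hP⟩ Q ⟨⟨t + p * x, ?_⟩, hQ⟩ hPQ)
    · rw [hPA, hw, ht]; module
    · rw [hQA, hw, ht]; module
  refine ⟨x / y, ?_⟩
  have hlim : Tendsto (fun τ : ℝ => q + τ / y) (𝓝 0) (𝓝 q) := by
    have : Continuous fun τ : ℝ => q + τ / y := by fun_prop
    simpa using this.tendsto 0
  filter_upwards [hlim.eventually (Icc_mem_nhds hq (by linarith : q < 1))] with τ hτ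
  have heq : A + τ • ((x / y) • lineDir φ + lineDir (φ + π / 2))
      = P + (q + τ / y) • (Q - P) := by
    have : (x / y) • lineDir φ + lineDir (φ + π / 2) = y⁻¹ • (Q - P) := by
      rw [hw, smul_add, smul_smul, smul_smul, inv_mul_cancel₀ hy, one_smul, div_eq_inv_mul]
    rw [this, hAP]
    module
  rw [heq]
  exact hC.add_smul_sub_mem hP hQ hτ

/-- Near `φ`, the distance from `O` to the line through `O + a • lineDir φ` with direction
`s • lineDir φ + lineDir (φ + π / 2)` is `a / (cos h - s * sin h)` at angle `φ + h`. -/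
lemma eventually_add_smul_lineDir_mem {C : Set (EuclideanSpace ℝ (Fin 2))}
    {O : EuclideanSpace ℝ (Fin 2)} {φ a s : ℝ}
    (h : ∀ᶠ τ in 𝓝 (0 : ℝ),
      O + a • lineDir φ + τ • (s • lineDir φ + lineDir (φ + π / 2)) ∈ C) :
    ∀ᶠ h in 𝓝 (0 : ℝ), 0 < cos h - s * sin h ∧
      O + (a / (cos h - s * sin h)) • lineDir (φ + h) ∈ C := by
  have hD : ContinuousAt (fun h : ℝ => cos h - s * sin h) 0 := by fun_prop
  have hpos : ∀ᶠ h in 𝓝 (0 : ℝ), 0 < cos h - s * sin h :=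
    hD.eventually (lt_mem_nhds (by simp))
  have hτ : Tendsto (fun h : ℝ => a * sin h / (cos h - s * sin h)) (𝓝 0) (𝓝 0) := by
    have : ContinuousAt (fun h : ℝ => a * sin h / (cos h - s * sin h)) 0 :=
      ContinuousAt.div (by fun_prop) hD (by simp)
    simpa [ContinuousAt] using this
  filter_upwards [hpos, hτ.eventually h] with h h0 hmem
  refine ⟨h0, ?_⟩
  convert hmem using 1
  have ha : a + a * sin h / (cos h - s * sin h) * s = a / (cos h - s * sin h) * cos h := by
    have h0' := h0.ne'
    rw [div_mul_eq_mul_div, div_mul_eq_mul_div, eq_div_iff h0', add_mul, div_mul_cancel₀ _ h0']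
    ring
  rw [lineDir_add, smul_add, smul_smul, smul_smul, ← ha]
  module

lemma two_mul_lt_div_add_div {a c d : ℝ} (ha : 0 < a) (hc : 0 < c) (hc1 : c < 1)
    (h₁ : 0 < c - d) (h₂ : 0 < c + d) : 2 * a < a / (c - d) + a / (c + d) := by
  rw [div_add_div _ _ h₁.ne' h₂.ne', lt_div_iff₀ (mul_pos h₁ h₂)]
  have : (c - d) * (c + d) < c := by nlinarith [sq_nonneg d]
  nlinarith

/-- If both ends of the chord at angle `φ` lie inside segments of `C` transversal to it, then
a function bounding from above the lengths of all segments of `C` on lines through `O`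
has no local maximum at `φ` with the length of that chord as its value. -/
lemma not_isLocalMax_of_transversal {C : Set (EuclideanSpace ℝ (Fin 2))}
    {O : EuclideanSpace ℝ (Fin 2)} {φ a b s t : ℝ} (ha : 0 < a) (hb : 0 < b)
    (hA : ∀ᶠ τ in 𝓝 (0 : ℝ),
      O + a • lineDir φ + τ • (s • lineDir φ + lineDir (φ + π / 2)) ∈ C)
    (hB : ∀ᶠ τ in 𝓝 (0 : ℝ),
      O + (-b) • lineDir φ + τ • (t • lineDir φ + lineDir (φ + π / 2)) ∈ C)
    {f : ℝ → ℝ} (hfφ : f φ = a + b)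
    (hf : ∀ ψ x y : ℝ, O + x • lineDir ψ ∈ C → O + y • lineDir ψ ∈ C → x - y ≤ f ψ) :
    ¬ IsLocalMax f φ := by
  intro hmax
  have hadd : Tendsto (fun h : ℝ => φ + h) (𝓝 0) (𝓝 φ) := by
    have : Continuous fun h : ℝ => φ + h := by fun_prop
    simpa using this.tendsto 0
  have hev : ∀ᶠ h in 𝓝 (0 : ℝ), 0 < cos h - s * sin h ∧ 0 < cos h - t * sin h ∧
      a / (cos h - s * sin h) + b / (cos h - t * sin h) ≤ a + b := by
    filter_upwards [eventually_add_smul_lineDir_mem hA, eventually_add_smul_lineDir_mem hB,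
      hadd.eventually hmax] with h h₁ h₂ h₃
    refine ⟨h₁.1, h₂.1, ?_⟩
    have := hf _ _ _ h₁.2 h₂.2
    rw [neg_div, sub_neg_eq_add] at this
    exact (this.trans h₃).trans_eq hfφ
  have hneg : Tendsto (fun h : ℝ => -h) (𝓝 0) (𝓝 0) := by
    simpa using (continuous_neg (G := ℝ)).tendsto 0
  have hsmall : ∀ᶠ h in 𝓝 (0 : ℝ), h ∈ Set.Ioo (-(π / 2)) (π / 2) :=
    Ioo_mem_nhds (by linarith [pi_pos]) (by linarith [pi_pos])
  have hall := (hev.and ((hneg.eventually hev).and hsmall)).filter_mono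
    (nhdsWithin_le_nhds (s := {0}ᶜ))
  obtain ⟨h, ⟨⟨hs, ht, hle⟩, ⟨hs', ht', hle'⟩, hIoo⟩, hne⟩ :=
    (hall.and self_mem_nhdsWithin).exists
  have hc := cos_pos_of_mem_Ioo hIoo
  have hc1 : cos h < 1 := by
    refine lt_of_le_of_ne (cos_le_one h) fun h1 => hne ?_
    exact (cos_eq_one_iff_of_lt_of_lt (by linarith [hIoo.1, pi_pos])
      (by linarith [hIoo.2, pi_pos])).1 h1
  simp only [cos_neg, sin_neg, mul_neg, sub_neg_eq_add] at hs' ht' hle'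
  linarith [two_mul_lt_div_add_div ha hc hc1 hs hs', two_mul_lt_div_add_div hb hc hc1 ht ht']

/-- The line through an interior point `O` meets `C` on both sides of `O`. -/
lemma exists_pos_add_smul_mem {C : Set (EuclideanSpace ℝ (Fin 2))}
    {O : EuclideanSpace ℝ (Fin 2)} (hO : O ∈ interior C) (u : EuclideanSpace ℝ (Fin 2)) :
    ∃ ε : ℝ, 0 < ε ∧ O + ε • u ∈ C ∧ O + (-ε) • u ∈ C := by
  have key : ∀ w : EuclideanSpace ℝ (Fin 2), ∀ᶠ ε in 𝓝 (0 : ℝ), O + ε • w ∈ C := by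
    intro w
    have : Continuous fun ε : ℝ => O + ε • w := by fun_prop
    have h := this.tendsto 0
    simp only [zero_smul, add_zero] at h
    exact h.eventually (mem_interior_iff_mem_nhds.1 hO)
  have hall := ((key u).and (key (-u))).filter_mono (nhdsWithin_le_nhds (s := Set.Ioi 0))
  obtain ⟨ε, ⟨h₁, h₂⟩, hε⟩ := (hall.and self_mem_nhdsWithin).exists
  exact ⟨ε, hε, h₁, by simpa using h₂⟩

/-- Let `C` be a convex polygon in the plane (convex hull of a finite set) with
nonempty interior, `O` an interior point, and `φ*` a local maximizer of the
chord-length function `f φ = |l(φ) ∩ C|` with chord `[A φ*, B φ*]`.  Then at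
least one of the endpoints `A φ*`, `B φ*` is a vertex (extreme point) of `C`. -/
theorem statement10 (V : Set (EuclideanSpace ℝ (Fin 2))) (hV : V.Finite)
    (C : Set (EuclideanSpace ℝ (Fin 2))) (hCdef : C = convexHull ℝ V)
    (hint : (interior C).Nonempty)
    (O : EuclideanSpace ℝ (Fin 2)) (hO : O ∈ interior C)
    (A B : ℝ → EuclideanSpace ℝ (Fin 2))
    (hchord : ∀ φ : ℝ,
      {x | ∃ t : ℝ, x = O + t • lineDir φ} ∩ C = segment ℝ (A φ) (B φ))
    (f : ℝ → ℝ) (hf : ∀ φ, f φ = dist (A φ) (B φ))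
    (φs : ℝ) (hmax : IsLocalMax f φs) :
    A φs ∈ Set.extremePoints ℝ C ∨ B φs ∈ Set.extremePoints ℝ C := by
  have hC : Convex ℝ C := hCdef ▸ convex_convexHull ℝ V
  by_contra! hcon
  obtain ⟨hAC, hBC⟩ := hcon
  have hAe := left_mem_extremePoints_segment (A φs) (B φs)
  have hBe := left_mem_extremePoints_segment (B φs) (A φs)
  rw [segment_symm] at hBe
  rw [← hchord] at hAe hBe
  obtain ⟨s, hs⟩ := exists_transversal_mem hC hAe hAC
  obtain ⟨t, ht⟩ := exists_transversal_mem hC hBe hBC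
  obtain ⟨a, ha⟩ := hAe.1.1
  obtain ⟨b, hb⟩ := hBe.1.1
  rw [ha] at hs
  rw [hb] at ht
  have hdist : ∀ ψ x y : ℝ, dist (O + x • lineDir ψ) (O + y • lineDir ψ) = |x - y| := by
    intro ψ x y
    rw [dist_add_left, dist_eq_norm, ← sub_smul, norm_smul, norm_lineDir, mul_one,
      Real.norm_eq_abs]
  have hfle : ∀ ψ x y : ℝ, O + x • lineDir ψ ∈ C → O + y • lineDir ψ ∈ C → x - y ≤ f ψ := by
    intro ψ x y hx hy
    rw [hf]
    refine (le_abs_self _).trans ((hdist ψ x y).symm.trans_le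
      (dist_le_dist_of_mem_segment ?_ ?_))
    · rw [← hchord]; exact ⟨⟨x, rfl⟩, hx⟩
    · rw [← hchord]; exact ⟨⟨y, rfl⟩, hy⟩
  have hfs : f φs = |a - b| := by rw [hf, ha, hb, hdist]
  have hbetween : ∀ ε : ℝ, O + ε • lineDir φs ∈ C → ε ∈ segment ℝ a b := by
    intro ε hε
    have hmem : O + ε • lineDir φs ∈ segment ℝ (A φs) (B φs) := by
      rw [← hchord]; exact ⟨⟨ε, rfl⟩, hε⟩
    obtain ⟨p, q, hp, hq, hpq, h⟩ := hmem
    refine ⟨p, q, hp, hq, hpq, ?_⟩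
    have hq' : q = 1 - p := by linarith
    have h0 : (p • a + q • b - ε) • lineDir φs = 0 := by
      rw [ha, hb] at h
      rw [← sub_eq_zero] at h
      rw [← h, hq', smul_eq_mul, smul_eq_mul]
      module
    have hu : lineDir φs ≠ 0 := by
      rw [← norm_ne_zero_iff, norm_lineDir]; exact one_ne_zero
    exact sub_eq_zero.1 ((smul_eq_zero.1 h0).resolve_right hu)
  obtain ⟨ε, hε, hpos, hneg⟩ := exists_pos_add_smul_mem hO (lineDir φs)
  have h₁ := hbetween _ hpos
  have h₂ := hbetween _ hneg
  rw [segment_eq_uIcc] at h₁ h₂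
  rcases le_total a b with hab | hab
  · rw [Set.uIcc_of_le hab] at h₁ h₂
    have hfs' : f φs = b + -a := by rw [hfs, abs_of_nonpos (by linarith)]; ring
    exact not_isLocalMax_of_transversal (b := -a) (by linarith [h₁.2]) (by linarith [h₂.1])
      ht (by rwa [neg_neg]) hfs' hfle hmax
  · rw [Set.uIcc_of_ge hab] at h₁ h₂
    have hfs' : f φs = a + -b := by rw [hfs, abs_of_nonneg (by linarith)]; ring
    exact not_isLocalMax_of_transversal (b := -b) (by linarith [h₁.2]) (by linarith [h₂.1])
      hs (by rwa [neg_neg]) hfs' hfle hmax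
end

section
/- Let C ⊂ ℝⁿ (n ≥ 2) be a closed convex set with nonempty interior and O an interior point. Suppose the segment [A*B*] with endpoints on ∂C and containing O is a local maximizer of chord length among segments through O with endpoints on ∂C. Then d_C(A*) + d_C(B*) ≤ n − 1, where d_C(P) is the maximal dimension k of an affine subspace H ⊆ ℝⁿ such that P lies in the interior of H ∩ C relative to H. -/
open Real RealInnerProductSpace

/-- `dimAt C P` is the maximal dimension `k` of an affine subspace `H` such that
`P` lies in the interior of `H ∩ C` relative to `H`. -/
noncomputable def dimAt {n : ℕ} (C : Set (EuclideanSpace ℝ (Fin n)))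
    (P : EuclideanSpace ℝ (Fin n)) : ℕ :=
  sSup {k : ℕ | ∃ H : AffineSubspace ℝ (EuclideanSpace ℝ (Fin n)),
    P ∈ H ∧ Module.finrank ℝ H.direction = k ∧
    ∃ ε : ℝ, 0 < ε ∧ Metric.ball P ε ∩ (H : Set (EuclideanSpace ℝ (Fin n))) ⊆ C}

lemma nonpos_at_zero_of_nonpos_right {f : ℝ → ℝ} (hf : Continuous f) {ε : ℝ} (hε : 0 < ε)
    (h : ∀ s, 0 < s → s < ε → f s ≤ 0) : f 0 ≤ 0 := by
  have ht : Filter.Tendsto f (nhdsWithin 0 (Set.Ioi 0)) (nhds (f 0)) :=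
    hf.continuousAt.tendsto.mono_left nhdsWithin_le_nhds
  refine le_of_tendsto ht ?_
  filter_upwards [Ioo_mem_nhdsGT hε] with s hs
  exact h s hs.1 hs.2

lemma quartic_coeff_of_nonpos {c₁ c₂ c₃ c₄ ε : ℝ} (hε : 0 < ε)
    (h : ∀ s, |s| < ε → c₁ * s + c₂ * s ^ 2 + c₃ * s ^ 3 + c₄ * s ^ 4 ≤ 0) :
    c₁ = 0 ∧ c₂ ≤ 0 := by
  have h₁ : c₁ ≤ 0 := by
    have := nonpos_at_zero_of_nonpos_right
      (f := fun s => c₁ + c₂ * s + c₃ * s ^ 2 + c₄ * s ^ 3) (by fun_prop) hε (by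
        intro s hs hsε
        have := h s (by rwa [abs_of_pos hs])
        refine nonpos_of_mul_nonpos_right (a := s) ?_ hs
        linarith)
    simpa using this
  have h₂ : -c₁ ≤ 0 := by
    have := nonpos_at_zero_of_nonpos_right
      (f := fun s => -c₁ + c₂ * s - c₃ * s ^ 2 + c₄ * s ^ 3) (by fun_prop) hε (by
        intro s hs hsε
        have := h (-s) (by rwa [abs_neg, abs_of_pos hs])
        refine nonpos_of_mul_nonpos_right (a := s) ?_ hs
        linarith)
    simpa using this
  have h₃ : c₂ ≤ 0 := by
    have := nonpos_at_zero_of_nonpos_right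
      (f := fun s => c₂ + c₄ * s ^ 2) (by fun_prop) hε (by
        intro s hs hsε
        have h₁ := h s (by rwa [abs_of_pos hs])
        have h₂ := h (-s) (by rwa [abs_neg, abs_of_pos hs])
        refine nonpos_of_mul_nonpos_right (a := s ^ 2) ?_ (by positivity)
        linarith)
    simpa using this
  exact ⟨by linarith, h₃⟩

/-- The squared length of a chord pivoting about a point between two non-parallel lines, as a
function of the pivoting parameter, has no local maximum. -/
lemma not_local_max_chord_between_lines {P Q R l ε : ℝ} (hS : 0 < P + 2 * R + Q)
    (hPQ : R ^ 2 < P * Q) (hl : 0 < l) (hε : 0 < ε)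
    (h : ∀ s, |s| < ε → (1 + s + l) ^ 2 * (P * (1 + s) ^ 2 + 2 * R * (1 + s) + Q) ≤
      (1 + l) ^ 2 * (P + 2 * R + Q) * (1 + s) ^ 2) : False := by
  obtain ⟨h₁, h₂⟩ := quartic_coeff_of_nonpos
    (c₁ := 2 * (1 + l) * ((P + R) - l * (R + Q)))
    (c₂ := (1 + l) ^ 2 * P + 4 * (1 + l) * (P + R) + (P + 2 * R + Q)
      - (1 + l) ^ 2 * (P + 2 * R + Q))
    (c₃ := 2 * (1 + l) * P + 2 * (P + R)) (c₄ := P) hε (by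
      intro s hs
      have := h s hs
      linarith)
  have h₃ : P + R = l * (R + Q) := by
    have : 2 * (1 + l) ≠ 0 := by positivity
    have := (mul_eq_zero.mp h₁).resolve_left this
    linarith
  have hRQ : 0 < R + Q := by
    by_contra! hneg
    nlinarith
  have hP : P = l * (R + Q) - R := by linarith
  have key : 0 < (1 + l) * (2 * l * (R + Q) ^ 2 + (P * Q - R ^ 2)) := by
    have : 0 < P * Q - R ^ 2 := by linarith
    positivity
  subst hP
  have hle := mul_nonpos_of_nonneg_of_nonpos hRQ.le h₂
  linarith

lemma inner_sq_lt_of_add_notMem {E : Type*} [NormedAddCommGroup E] [InnerProductSpace ℝ E]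
    {V W : Submodule ℝ E} {p q : E} (hp : p ∈ V) (hq : q ∈ W) (hV : p + q ∉ V)
    (hW : p + q ∉ W) : inner ℝ p q ^ 2 < ‖p‖ ^ 2 * ‖q‖ ^ 2 := by
  have hp0 : p ≠ 0 := by
    rintro rfl
    exact hW (by simpa using hq)
  have hP : 0 < ‖p‖ ^ 2 := by positivity
  by_contra! hle
  have hzero : ‖‖p‖ ^ 2 • q - inner ℝ p q • p‖ ^ 2 ≤ 0 := by
    rw [norm_sub_sq_real, norm_smul, norm_smul, inner_smul_left, inner_smul_right,
      real_inner_comm p q, mul_pow, mul_pow, Real.norm_eq_abs, Real.norm_eq_abs, sq_abs, sq_abs]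
    simp only [conj_trivial]
    have := mul_le_mul_of_nonneg_left hle hP.le
    linarith
  have hz : ‖p‖ ^ 2 • q - inner ℝ p q • p = 0 := by
    rw [← norm_eq_zero]
    exact pow_eq_zero_iff two_ne_zero |>.mp (le_antisymm hzero (by positivity))
  have hqV : q ∈ V := by
    rw [← V.smul_mem_iff hP.ne', sub_eq_zero.mp hz]
    exact V.smul_mem _ hp
  exact hV (V.add_mem hp hqV)

lemma disjoint_of_local_max {E : Type*} [NormedAddCommGroup E] [InnerProductSpace ℝ E]
    {V W : Submodule ℝ E} {a : E} {l δ : ℝ} (hl : 0 < l) (hδ : 0 < δ)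
    (h : ∀ v ∈ V, ∀ w ∈ W, ‖v‖ < δ → ‖w‖ < δ → ∀ μ : ℝ, 0 < μ →
      -(l • a) + w = -(μ • (a + v)) → (1 + μ) * ‖a + v‖ ≤ (1 + l) * ‖a‖) :
    Disjoint V W := by
  rw [Submodule.disjoint_def]
  intro v hvV hvW
  by_contra hv
  have hn : 0 < ‖v‖ := norm_pos_iff.mpr hv
  obtain ⟨t, ht, ht₁, ht₂⟩ : ∃ t : ℝ, 0 < t ∧ t * ‖v‖ < δ ∧ l * (t * ‖v‖) < δ := by
    refine ⟨δ / (2 * (1 + l) * ‖v‖), by positivity, ?_, ?_⟩ <;> field_simp <;> linarith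
  have hs : ∀ s : ℝ, |s| = t → ‖a + s • v‖ ^ 2 ≤ ‖a‖ ^ 2 := by
    intro s hs
    have := h (s • v) (V.smul_mem _ hvV) (-(l • s • v))
      (W.neg_mem (W.smul_mem _ (W.smul_mem _ hvW)))
      (by rwa [norm_smul, Real.norm_eq_abs, hs])
      (by rwa [norm_neg, norm_smul, norm_smul, Real.norm_eq_abs, Real.norm_eq_abs, hs,
        abs_of_pos hl])
      l hl (by module)
    have := le_of_mul_le_mul_left this (by positivity)
    gcongr
  have h₁ := hs t (abs_of_pos ht)
  have h₂ := hs (-t) (by rw [abs_neg, abs_of_pos ht])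
  rw [norm_add_sq_real, norm_smul, inner_smul_right, mul_pow, Real.norm_eq_abs, sq_abs] at h₁ h₂
  have : 0 < t ^ 2 * ‖v‖ ^ 2 := by positivity
  linarith

lemma notMem_sup_of_local_max {E : Type*} [NormedAddCommGroup E] [InnerProductSpace ℝ E]
    {V W : Submodule ℝ E} {a : E} {l δ : ℝ} (hl : 0 < l) (hδ : 0 < δ)
    (hV : a ∉ V) (hW : a ∉ W)
    (h : ∀ v ∈ V, ∀ w ∈ W, ‖v‖ < δ → ‖w‖ < δ → ∀ μ : ℝ, 0 < μ →
      -(l • a) + w = -(μ • (a + v)) → (1 + μ) * ‖a + v‖ ≤ (1 + l) * ‖a‖) :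
    a ∉ V ⊔ W := by
  intro ha
  obtain ⟨p, hp, q, hq, rfl⟩ := Submodule.mem_sup.mp ha
  have hsum : ∀ x : ℝ, ‖x • p + q‖ ^ 2 = ‖p‖ ^ 2 * x ^ 2 + 2 * inner ℝ p q * x + ‖q‖ ^ 2 := by
    intro x
    rw [norm_add_sq_real, norm_smul, inner_smul_left, mul_pow, Real.norm_eq_abs, sq_abs]
    simp only [conj_trivial]
    ring
  have hone : ‖p + q‖ ^ 2 = ‖p‖ ^ 2 + 2 * inner ℝ p q + ‖q‖ ^ 2 := by
    simpa using hsum 1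
  have hne : p + q ≠ 0 := fun h0 => hV (h0 ▸ V.zero_mem)
  obtain ⟨ε, hε, hε₁, hε₂, hε₃⟩ : ∃ ε : ℝ, 0 < ε ∧ ε ≤ 1 / 2 ∧ ε * ‖p‖ < δ ∧
      2 * l * ε * ‖q‖ < δ := by
    have : ∀ c : ℝ, ∀ᶠ x in nhdsWithin (0 : ℝ) (Set.Ioi 0), c * x < δ := by
      intro c
      have : Filter.Tendsto (fun x : ℝ => c * x) (nhdsWithin 0 (Set.Ioi 0)) (nhds (c * 0)) :=
        ((continuous_const.mul continuous_id).tendsto 0).mono_left nhdsWithin_le_nhds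
      exact this.eventually_lt_const (by simpa using hδ)
    obtain ⟨x, ⟨h₁, h₂⟩, h₃⟩ := (((this ‖p‖).and (this (2 * l * ‖q‖))).and
      (Ioo_mem_nhdsGT (show (0 : ℝ) < 1 / 2 by norm_num))).exists
    exact ⟨x, h₃.1, h₃.2.le, by linarith, by linarith⟩
  refine not_local_max_chord_between_lines (P := ‖p‖ ^ 2) (Q := ‖q‖ ^ 2) (R := inner ℝ p q)
    (by rw [← hone]; positivity) (inner_sq_lt_of_add_notMem hp hq hV hW) hl hε ?_
  intro s hs
  have hs' := abs_lt.mp hs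
  have hx : 1 / 2 < 1 + s := by linarith
  have hx0 : 0 < 1 + s := by linarith
  have hvec : p + q + s • p = (1 + s) • p + q := by module
  have hkey := h (s • p) (V.smul_mem _ hp) ((l * s / (1 + s)) • q) (W.smul_mem _ hq)
    (by
      rw [norm_smul, Real.norm_eq_abs]
      exact (mul_le_mul_of_nonneg_right hs.le (norm_nonneg p)).trans_lt hε₂)
    (by
      rw [norm_smul, Real.norm_eq_abs, abs_div, abs_mul, abs_of_pos hl, abs_of_pos hx0]
      refine lt_of_le_of_lt (mul_le_mul_of_nonneg_right ?_ (norm_nonneg q)) hε₃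
      rw [div_le_iff₀ hx0]
      have : l * |s| ≤ l * ε := mul_le_mul_of_nonneg_left hs.le hl.le
      have : 0 < l * ε := by positivity
      nlinarith)
    (l / (1 + s)) (by positivity)
    (by
      rw [hvec]
      match_scalars <;> field_simp <;> ring)
  rw [hvec] at hkey
  have hmul : (1 + s + l) * ‖(1 + s) • p + q‖ ≤ (1 + l) * ‖p + q‖ * (1 + s) := by
    have := mul_le_mul_of_nonneg_right hkey hx0.le
    calc _ = (1 + l / (1 + s)) * ‖(1 + s) • p + q‖ * (1 + s) := by field_simp
      _ ≤ _ := this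
  have hsq := pow_le_pow_left₀ (by positivity) hmul 2
  rwa [mul_pow, mul_pow, mul_pow, hsum, hone] at hsq

lemma dimAt_witness {n : ℕ} {C : Set (EuclideanSpace ℝ (Fin n))}
    {P : EuclideanSpace ℝ (Fin n)} (hP : P ∈ C) :
    ∃ V : Submodule ℝ (EuclideanSpace ℝ (Fin n)), Module.finrank ℝ V = dimAt C P ∧
      ∃ ε : ℝ, 0 < ε ∧ ∀ v ∈ V, ‖v‖ < ε → P + v ∈ C := by
  obtain ⟨H, hPH, hdim, ε, hε, hsub⟩ := Nat.sSup_mem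
    (s := {k : ℕ | ∃ H : AffineSubspace ℝ (EuclideanSpace ℝ (Fin n)),
      P ∈ H ∧ Module.finrank ℝ H.direction = k ∧
      ∃ ε : ℝ, 0 < ε ∧ Metric.ball P ε ∩ (H : Set (EuclideanSpace ℝ (Fin n))) ⊆ C})
    ⟨0, AffineSubspace.mk' P ⊥, AffineSubspace.self_mem_mk' _ _, by simp, 1, one_pos, by
      rintro x ⟨-, hx⟩
      have hx' : x -ᵥ P ∈ (⊥ : Submodule ℝ (EuclideanSpace ℝ (Fin n))) :=
        AffineSubspace.mem_mk'.mp hx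
      rw [Submodule.mem_bot, vsub_eq_sub, sub_eq_zero] at hx'
      rwa [hx']⟩
    ⟨n, by
      rintro k ⟨H, -, rfl, -⟩
      simpa using H.direction.finrank_le⟩
  refine ⟨H.direction, hdim, ε, hε, fun v hv hvε => hsub ⟨by simpa using hvε, ?_⟩⟩
  rw [add_comm]
  exact AffineSubspace.vadd_mem_of_mem_direction hv hPH

lemma add_mem_frontier_of_mem {E : Type*} [NormedAddCommGroup E] [NormedSpace ℝ E] {C : Set E}
    (hC : IsClosed C) (hconv : Convex ℝ C) {P v : E} (hP : P ∈ frontier C)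
    (h₁ : P + v ∈ C) (h₂ : P - v ∈ C) : P + v ∈ frontier C := by
  rw [hC.frontier_eq] at hP ⊢
  refine ⟨h₁, fun hi => hP.2 ?_⟩
  refine hconv.openSegment_interior_self_subset_interior hi h₂
    ⟨1 / 2, 1 / 2, by norm_num, by norm_num, by norm_num, ?_⟩
  module

lemma sub_notMem_of_mem_frontier {E : Type*} [NormedAddCommGroup E] [NormedSpace ℝ E] {C : Set E}
    (hconv : Convex ℝ C) {O P : E} (hO : O ∈ interior C) (hP : P ∈ frontier C)
    {V : Submodule ℝ E} {ε : ℝ} (hε : 0 < ε) (hV : ∀ v ∈ V, ‖v‖ < ε → P + v ∈ C) :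
    P - O ∉ V := by
  intro h
  set t : ℝ := ε / (2 * (‖P - O‖ + 1)) with ht_def
  have ht : 0 < t := by positivity
  have hmem : P + t • (P - O) ∈ C := by
    refine hV _ (V.smul_mem _ h) ?_
    rw [norm_smul, Real.norm_eq_abs, abs_of_pos ht, ht_def]
    have := norm_nonneg (P - O)
    field_simp
    nlinarith
  refine hP.2 (hconv.openSegment_interior_self_subset_interior hO hmem
    ⟨t / (1 + t), 1 / (1 + t), by positivity, by positivity, by field_simp; ring, ?_⟩)
  match_scalars <;> field_simp <;> ring

/-- Let `C ⊆ ℝⁿ` (`n ≥ 2`) be closed convex with nonempty interior and `O` an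
interior point.  If the segment `[A*, B*]` through `O`, with endpoints on `∂C`,
is a local maximizer of chord length among such segments, then
`d_C(A*) + d_C(B*) ≤ n - 1`. -/
theorem statement14 (n : ℕ) (hn : 2 ≤ n)
    (C : Set (EuclideanSpace ℝ (Fin n)))
    (hC : IsClosed C) (hconv : Convex ℝ C) (hint : (interior C).Nonempty)
    (O : EuclideanSpace ℝ (Fin n)) (hO : O ∈ interior C)
    (As Bs : EuclideanSpace ℝ (Fin n))
    (hAs : As ∈ frontier C) (hBs : Bs ∈ frontier C) (hOseg : O ∈ segment ℝ As Bs)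
    (hlocmax : ∃ U V : Set (EuclideanSpace ℝ (Fin n)),
      IsOpen U ∧ IsOpen V ∧ As ∈ U ∧ Bs ∈ V ∧
      ∀ A ∈ frontier C ∩ U, ∀ B ∈ frontier C ∩ V,
        O ∈ segment ℝ A B → dist A B ≤ dist As Bs) :
    dimAt C As + dimAt C Bs ≤ n - 1 := by
  have hAC : As ∈ C := hC.frontier_subset hAs
  have hBC : Bs ∈ C := hC.frontier_subset hBs
  obtain ⟨V, hVdim, εA, hεA, hV⟩ := dimAt_witness hAC
  obtain ⟨W, hWdim, εB, hεB, hW⟩ := dimAt_witness hBC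
  obtain ⟨U₁, U₂, hU₁, hU₂, hAU, hBU, hmax⟩ := hlocmax
  obtain ⟨δA, hδA, hballA⟩ := Metric.isOpen_iff.mp hU₁ As hAU
  obtain ⟨δB, hδB, hballB⟩ := Metric.isOpen_iff.mp hU₂ Bs hBU
  obtain ⟨α, β, hα, hβ, hαβ, hsum⟩ := hOseg
  have hα : 0 < α := by
    refine hα.lt_of_ne ?_
    rintro rfl
    have : Bs = O := by simpa [show β = 1 by linarith] using hsum
    exact hBs.2 (this ▸ hO)
  have hβ : 0 < β := by
    refine hβ.lt_of_ne ?_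
    rintro rfl
    have : As = O := by simpa [show α = 1 by linarith] using hsum
    exact hAs.2 (this ▸ hO)
  have hBO : Bs - O = -((α / β) • (As - O)) := by
    have hα' : α = 1 - β := by linarith
    subst hα'
    rw [← hsum]
    match_scalars <;> field_simp <;> ring
  have hl : 0 < α / β := by positivity
  have hδ : 0 < min (min εA εB) (min δA δB) := by positivity
  have hVa : As - O ∉ V := sub_notMem_of_mem_frontier hconv hO hAs hεA hV
  have hWa : As - O ∉ W := by
    have := sub_notMem_of_mem_frontier hconv hO hBs hεB hW
    rwa [hBO, W.neg_mem_iff, W.smul_mem_iff hl.ne'] at this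
  have hdist : ∀ (x : EuclideanSpace ℝ (Fin n)) (μ : ℝ), 0 < μ →
      ‖x + μ • x‖ = (1 + μ) * ‖x‖ := by
    intro x μ hμ
    rw [show x + μ • x = (1 + μ) • x by module, norm_smul, Real.norm_eq_abs,
      abs_of_pos (by positivity)]
  have hlocal : ∀ v ∈ V, ∀ w ∈ W, ‖v‖ < min (min εA εB) (min δA δB) →
      ‖w‖ < min (min εA εB) (min δA δB) → ∀ μ : ℝ, 0 < μ →
      -((α / β) • (As - O)) + w = -(μ • (As - O + v)) →
      (1 + μ) * ‖As - O + v‖ ≤ (1 + α / β) * ‖As - O‖ := by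
    intro v hv w hw hvn hwn μ hμ heq
    simp only [lt_min_iff] at hvn hwn
    rw [← hBO] at heq
    have hAf : As + v ∈ frontier C := add_mem_frontier_of_mem hC hconv hAs (hV v hv hvn.1.1)
      (by simpa [sub_eq_add_neg] using hV (-v) (V.neg_mem hv) (by simpa using hvn.1.1))
    have hBf : Bs + w ∈ frontier C := add_mem_frontier_of_mem hC hconv hBs (hW w hw hwn.1.2)
      (by simpa [sub_eq_add_neg] using hW (-w) (W.neg_mem hw) (by simpa using hwn.1.2))
    have hBw : Bs + w = O - μ • (As - O + v) := by
      rw [sub_eq_add_neg, ← heq]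
      module
    have hseg : O ∈ segment ℝ (As + v) (Bs + w) := by
      refine ⟨μ / (1 + μ), 1 / (1 + μ), by positivity, by positivity, by field_simp; ring, ?_⟩
      rw [hBw]
      match_scalars <;> field_simp <;> ring
    have hle := hmax (As + v) ⟨hAf, hballA (by simpa using hvn.2.1)⟩ (Bs + w)
      ⟨hBf, hballB (by simpa using hwn.2.2)⟩ hseg
    rw [dist_eq_norm, dist_eq_norm, hBw,
      show As + v - (O - μ • (As - O + v)) = (As - O + v) + μ • (As - O + v) by module,
      show As - Bs = (As - O) - (Bs - O) by module, hBO, sub_neg_eq_add,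
      hdist _ _ hμ, hdist _ _ hl] at hle
    exact hle
  have hdisj := disjoint_of_local_max hl hδ hlocal
  have hsup := notMem_sup_of_local_max hl hδ hVa hWa hlocal
  have hlt : Module.finrank ℝ ↥(V ⊔ W) < n := by
    have := Submodule.finrank_lt (s := V ⊔ W) (fun h => hsup (h ▸ Submodule.mem_top))
    simpa using this
  have hadd := Submodule.finrank_sup_add_finrank_inf_eq V W
  rw [hdisj.eq_bot, finrank_bot, hVdim, hWdim] at hadd
  omega
end
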